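/- Every perfect pair (A,I) has a left Henselization: there exist a perfect pair (H,J) that is left Henselian and a morphism of pairs φ:(A,I)→(H,J) such that for every morphism of pairs ψ0:(A,I)→(B,K) with (B,K) a perfect left Henselian pair, there exists a unique morphism of pairs ψ:(H,J)→(B,K) with ψ0 = ψ∘φ. -/

import Mathlib

open Polynomial

universe u

/-- A morphism of pairs `(A,I) → (B,J)`: a ring homomorphism `φ : A → B` with
`φ ⁻¹(J) = I`. -/
def IsPairHom {A B : Type*} [Ring A] [Ring B] (I : TwoSidedIdeal A)
    (J : TwoSidedIdeal B) (φ : A →+* B) : Prop :=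
  ∀ a : A, φ a ∈ J ↔ a ∈ I

/-- The commutator filtration of the pair `(A,I)`, indexed from `0`:
`commFilt I 0 = I^(1) = I` and `commFilt I (n+1) = I^(n+2)` is the two-sided ideal
generated by the commutators `[A, I^(n+1)]`. -/
def commFilt {A : Type*} [Ring A] (I : TwoSidedIdeal A) : ℕ → TwoSidedIdeal A
  | 0 => I
  | n + 1 => TwoSidedIdeal.span {x | ∃ a b : A, b ∈ commFilt I n ∧ x = a * b - b * a}

/-- A pair `(A,I)` is perfect if the intersection of its commutator filtration is `{0}`. -/
def IsPerfectPair {A : Type*} [Ring A] (I : TwoSidedIdeal A) : Prop :=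
  ∀ x : A, (∀ n, x ∈ commFilt I n) → x = 0

/-- A pair `(A,I)` is a Jacobson pair if `I` is contained in the Jacobson radical of `A`;
for a two-sided ideal this is equivalent to `1 + a` being a unit for every `a ∈ I`. -/
def IsJacobsonPair {A : Type*} [Ring A] (I : TwoSidedIdeal A) : Prop :=
  ∀ a ∈ I, IsUnit (1 + a)

/-- `f₁, f₂ ∈ A[x]` are left coprime: `A[x]f₁ + A[x]f₂ = A[x]`, equivalently there are
`g₁, g₂` with `g₁f₁ + g₂f₂ = 1`. -/
def LeftCoprime {A : Type*} [Semiring A] (f1 f2 : A[X]) : Prop :=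
  ∃ g1 g2 : A[X], g1 * f1 + g2 * f2 = 1

/-- A pair `(A,I)` is left Henselian: it is a Jacobson pair, and every factorization of
the reduction of a monic polynomial into left coprime monic factors lifts uniquely. -/
def IsLeftHenselianPair {A : Type*} [Ring A] (I : TwoSidedIdeal A) : Prop :=
  IsJacobsonPair I ∧
  ∀ F : A[X], F.Monic →
    ∀ f1 f2 : (I.ringCon.Quotient)[X], f1.Monic → f2.Monic → LeftCoprime f1 f2 →
      F.map (I.ringCon.mk') = f1 * f2 →
      ∃! p : A[X] × A[X], p.1.Monic ∧ p.2.Monic ∧ F = p.1 * p.2 ∧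
        p.1.map I.ringCon.mk' = f1 ∧ p.2.map I.ringCon.mk' = f2

/-- A ring homomorphism is local if it sends every nonunit to a nonunit. -/
def RingHomIsLocal {A B : Type*} [Ring A] [Ring B] (φ : A →+* B) : Prop :=
  ∀ a : A, ¬ IsUnit a → ¬ IsUnit (φ a)

/-- `φ : (A,I) → (H,J)` is a left Henselization of the perfect pair `(A,I)`:
`(H,J)` is a perfect left Henselian pair and every morphism of pairs from `(A,I)` to a
perfect left Henselian pair factors uniquely through `φ`. -/
def IsLeftHenselization {A H : Type u} [Ring A] [Ring H] (I : TwoSidedIdeal A)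
    (J : TwoSidedIdeal H) (φ : A →+* H) : Prop :=
  IsPairHom I J φ ∧ IsPerfectPair J ∧ IsLeftHenselianPair J ∧
  ∀ (B : Type u) (_ : Ring B) (K : TwoSidedIdeal B) (ψ0 : A →+* B),
    IsPairHom I K ψ0 → IsPerfectPair K → IsLeftHenselianPair K →
    ∃! ψ : H →+* B, IsPairHom J K ψ ∧ ψ0 = ψ.comp φ

/-!
Terms over `A` are recipes built from elements of `A` by ring operations, by inverting `1 + s` for
`s` in the ideal, and by taking a coefficient of a lifted factor of a monic polynomial whose lower
coefficients are terms. Every term has a residue in `A`, so the side conditions (`s` lies in the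
ideal, the given residual factorization is left coprime) can be tested in `(A, I)` once and for all;
hence a term has a value in every left Henselian pair under `(A, I)`, and morphisms of such pairs
preserve these values.

The terms form a set, so the simultaneous values of all terms in all perfect left Henselian pairs
under `(A, I)` form a small ring `H`, although the product in which it sits is large. Inverses and
lifted factors are again given by terms, so `H` is left Henselian; it is perfect because it embeds
in a product of perfect pairs. Its projections give the required morphisms, and since every element
of `H` is the value of a term, they are the only ones.
-/

section Residue

variable {A B C : Type*} [Ring A] [Ring B] [Ring C]
  {I : TwoSidedIdeal A} {J : TwoSidedIdeal B} {K : TwoSidedIdeal C}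
  {φ : A →+* B} {ψ : B →+* C}

theorem mk'_eq_mk'_iff_sub_mem (I : TwoSidedIdeal A) {a b : A} :
    I.ringCon.mk' a = I.ringCon.mk' b ↔ a - b ∈ I :=
  (RingCon.eq I.ringCon).trans (I.rel_iff a b)

theorem mk'_eq_zero_iff_mem (I : TwoSidedIdeal A) {a : A} : I.ringCon.mk' a = 0 ↔ a ∈ I := by
  rw [← map_zero I.ringCon.mk', mk'_eq_mk'_iff_sub_mem, sub_zero]

theorem map_ringInverse_of_isUnit (φ : A →+* B) {a : A} (ha : IsUnit a) :
    φ (Ring.inverse a) = Ring.inverse (φ a) := by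
  obtain ⟨u, rfl⟩ := ha
  rw [Ring.inverse_unit]
  exact (Ring.inverse_unit (Units.map (φ : A →* B) u)).symm

theorem IsPairHom.comp (hψ : IsPairHom J K ψ) (hφ : IsPairHom I J φ) :
    IsPairHom I K (ψ.comp φ) :=
  fun a => (hψ (φ a)).trans (hφ a)

theorem IsPairHom.mk'_eq_mk'_iff (hφ : IsPairHom I J φ) {a b : A} :
    J.ringCon.mk' (φ a) = J.ringCon.mk' (φ b) ↔ I.ringCon.mk' a = I.ringCon.mk' b := by
  rw [mk'_eq_mk'_iff_sub_mem, mk'_eq_mk'_iff_sub_mem, ← map_sub, hφ]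

theorem IsPairHom.map_mk'_eq_map_mk'_iff (hφ : IsPairHom I J φ) {f g : A[X]} :
    (f.map φ).map J.ringCon.mk' = (g.map φ).map J.ringCon.mk' ↔
      f.map I.ringCon.mk' = g.map I.ringCon.mk' := by
  simp only [Polynomial.ext_iff, coeff_map, hφ.mk'_eq_mk'_iff]

theorem leftCoprime_map_iff_of_surjective {π : A →+* B} (hπ : Function.Surjective π)
    {f₁ f₂ : A[X]} :
    LeftCoprime (f₁.map π) (f₂.map π) ↔
      ∃ g₁ g₂ : A[X], (g₁ * f₁ + g₂ * f₂).map π = (1 : A[X]).map π := by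
  simp only [LeftCoprime, (map_surjective π hπ).exists, Polynomial.map_add, Polynomial.map_mul,
    Polynomial.map_one]

theorem IsPairHom.leftCoprime_map_mk' (hφ : IsPairHom I J φ) {f₁ f₂ : A[X]}
    (h : LeftCoprime (f₁.map I.ringCon.mk') (f₂.map I.ringCon.mk')) :
    LeftCoprime ((f₁.map φ).map J.ringCon.mk') ((f₂.map φ).map J.ringCon.mk') := by
  obtain ⟨g₁, g₂, hg⟩ := (leftCoprime_map_iff_of_surjective I.ringCon.mk'_surjective).1 h
  refine (leftCoprime_map_iff_of_surjective J.ringCon.mk'_surjective).2 ⟨g₁.map φ, g₂.map φ, ?_⟩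
  simpa only [Polynomial.map_add, Polynomial.map_mul, Polynomial.map_one]
    using hφ.map_mk'_eq_map_mk'_iff.2 hg

theorem IsPairHom.leftCoprime_of_surjective (hφ : IsPairHom I J φ)
    (hsurj : Function.Surjective (J.ringCon.mk'.comp φ)) {f₁ f₂ : A[X]}
    (h : LeftCoprime ((f₁.map φ).map J.ringCon.mk') ((f₂.map φ).map J.ringCon.mk')) :
    LeftCoprime (f₁.map I.ringCon.mk') (f₂.map I.ringCon.mk') := by
  rw [Polynomial.map_map, Polynomial.map_map, leftCoprime_map_iff_of_surjective hsurj] at h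
  obtain ⟨g₁, g₂, hg⟩ := h
  refine (leftCoprime_map_iff_of_surjective I.ringCon.mk'_surjective).2 ⟨g₁, g₂, ?_⟩
  rwa [← hφ.map_mk'_eq_map_mk'_iff, Polynomial.map_map, Polynomial.map_map]

theorem IsPairHom.map_mem_commFilt (hφ : IsPairHom I J φ) (n : ℕ) :
    ∀ x ∈ commFilt I n, φ x ∈ commFilt J n := by
  induction n with
  | zero => exact fun x => (hφ x).2
  | succ n ih =>
    suffices commFilt I (n + 1) ≤ (commFilt J (n + 1)).comap φ from
      fun x hx => (TwoSidedIdeal.mem_comap φ).1 (this hx)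
    rw [commFilt, TwoSidedIdeal.span_le]
    rintro _ ⟨a, b, hb, rfl⟩
    rw [SetLike.mem_coe, TwoSidedIdeal.mem_comap, map_sub, map_mul, map_mul]
    exact TwoSidedIdeal.subset_span ⟨φ a, φ b, ih b hb, rfl⟩

theorem isPerfectPair_of_isPairHom_of_jointly_injective {ι : Type*} {B : ι → Type*}
    [∀ i, Ring (B i)] {K : ∀ i, TwoSidedIdeal (B i)} {pr : ∀ i, A →+* B i}
    (hK : ∀ i, IsPerfectPair (K i)) (hpr : ∀ i, IsPairHom I (K i) (pr i))
    (hinj : ∀ x y, (∀ i, pr i x = pr i y) → x = y) : IsPerfectPair I := by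
  refine fun x hx => hinj x 0 fun i => ?_
  rw [map_zero]
  exact hK i _ fun n => (hpr i).map_mem_commFilt n x (hx n)

end Residue

section MonicOfCoeffs

variable {A B : Type*} [Ring A] [Ring B]

/-- The monic polynomial `X ^ n + c (n - 1) X ^ (n - 1) + ⋯ + c 0`; the values `c k` with `n ≤ k`
are ignored. -/
noncomputable def monicOfCoeffs (n : ℕ) (c : ℕ → A) : A[X] :=
  X ^ n + ∑ k ∈ Finset.range n, C (c k) * X ^ k

theorem monic_monicOfCoeffs (n : ℕ) (c : ℕ → A) : (monicOfCoeffs n c).Monic :=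
  monic_X_pow_add <| (degree_sum_fin_lt fun k : Fin n => c k).trans_eq' <| by
    rw [Finset.sum_range]

theorem map_monicOfCoeffs (f : A →+* B) (n : ℕ) (c : ℕ → A) :
    (monicOfCoeffs n c).map f = monicOfCoeffs n fun k => f (c k) := by
  simp [monicOfCoeffs, Polynomial.map_sum]

theorem monicOfCoeffs_coeff_of_monic {F : A[X]} (hF : F.Monic) :
    monicOfCoeffs F.natDegree F.coeff = F :=
  hF.as_sum.symm

theorem IsJacobsonPair.monicOfCoeffs_coeff_of_map_mk'_eq {K : TwoSidedIdeal B}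
    (hK : IsJacobsonPair K) {ψ : A →+* B} {p : B[X]} {e : A[X]} (hp : p.Monic) (he : e.Monic)
    (h : p.map K.ringCon.mk' = (e.map ψ).map K.ringCon.mk') :
    monicOfCoeffs e.natDegree p.coeff = p := by
  rcases subsingleton_or_nontrivial K.ringCon.Quotient with _ | _
  · have isUnit_zero : IsUnit (1 + (-1) : B) :=
      hK _ ((mk'_eq_zero_iff_mem K).1 (Subsingleton.elim _ _))
    rw [add_neg_cancel, isUnit_zero_iff] at isUnit_zero
    have := subsingleton_of_zero_eq_one isUnit_zero
    exact Subsingleton.elim _ _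
  · have natDegree_eq : e.natDegree = p.natDegree := by
      rw [← hp.natDegree_map K.ringCon.mk', h, Polynomial.map_map, he.natDegree_map]
    rw [natDegree_eq, monicOfCoeffs_coeff_of_monic hp]

end MonicOfCoeffs

section FactorLift

variable {A B : Type*} [Ring A] [Ring B] {I : TwoSidedIdeal A} {K : TwoSidedIdeal B}
  {ψ : A →+* B}

/-- `e₁` and `e₂` are monic polynomials over `A` that represent a factorization of the reduction of
`F` modulo `I` into left coprime factors. Representatives over `A` are used, instead of polynomials
over the quotient ring, so that they can be transported along ring homomorphisms. -/
structure IsCoprimeFactorization (I : TwoSidedIdeal A) (F e₁ e₂ : A[X]) : Prop where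
  monic_fst : e₁.Monic
  monic_snd : e₂.Monic
  leftCoprime : LeftCoprime (e₁.map I.ringCon.mk') (e₂.map I.ringCon.mk')
  map_eq : F.map I.ringCon.mk' = (e₁ * e₂).map I.ringCon.mk'

/-- `p` is a monic factorization of `F` that lifts the residual factors represented by `e₁` and
`e₂`. -/
def IsFactorLift (I : TwoSidedIdeal A) (F e₁ e₂ : A[X]) (p : A[X] × A[X]) : Prop :=
  p.1.Monic ∧ p.2.Monic ∧ F = p.1 * p.2 ∧
    p.1.map I.ringCon.mk' = e₁.map I.ringCon.mk' ∧ p.2.map I.ringCon.mk' = e₂.map I.ringCon.mk'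

theorem IsLeftHenselianPair.existsUnique_isFactorLift (hI : IsLeftHenselianPair I)
    {F e₁ e₂ : A[X]} (hF : F.Monic) (h : IsCoprimeFactorization I F e₁ e₂) :
    ∃! p, IsFactorLift I F e₁ e₂ p :=
  hI.2 F hF _ _ (h.monic_fst.map _) (h.monic_snd.map _) h.leftCoprime
    (h.map_eq.trans (Polynomial.map_mul _))

theorem isLeftHenselianPair_of_surjective (hsurj : Function.Surjective (K.ringCon.mk'.comp ψ))
    (hK : IsJacobsonPair K)
    (hlift : ∀ (F : B[X]) (e₁ e₂ : A[X]), F.Monic → e₁.Monic → e₂.Monic →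
      IsCoprimeFactorization K F (e₁.map ψ) (e₂.map ψ) →
        ∃! p, IsFactorLift K F (e₁.map ψ) (e₂.map ψ) p) :
    IsLeftHenselianPair K := by
  refine ⟨hK, fun F hF f₁ f₂ hf₁ hf₂ hcop hFf => ?_⟩
  have exists_monic_lift (f : K.ringCon.Quotient[X]) (hf : f.Monic) :
      ∃ e : A[X], (e.map ψ).map K.ringCon.mk' = f ∧ e.Monic := by
    obtain ⟨e, he, -, hmonic⟩ := lifts_and_natDegree_eq_and_monic
      ((mem_lifts f).2 (map_surjective _ hsurj f)) hf
    exact ⟨e, by rw [Polynomial.map_map, he], hmonic⟩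
  obtain ⟨e₁, rfl, he₁⟩ := exists_monic_lift f₁ hf₁
  obtain ⟨e₂, rfl, he₂⟩ := exists_monic_lift f₂ hf₂
  exact hlift F e₁ e₂ hF he₁ he₂
    ⟨he₁.map ψ, he₂.map ψ, hcop, hFf.trans (Polynomial.map_mul _).symm⟩

theorem isLeftHenselianPair_bot (R : Type*) [Ring R] :
    IsLeftHenselianPair (⊥ : TwoSidedIdeal R) := by
  have mk'_injective : Function.Injective (⊥ : TwoSidedIdeal R).ringCon.mk' := fun a b h => by
    rwa [mk'_eq_mk'_iff_sub_mem, TwoSidedIdeal.mem_bot, sub_eq_zero] at h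
  refine isLeftHenselianPair_of_surjective (ψ := RingHom.id R) (RingCon.mk'_surjective _) ?_ ?_
  · intro a ha
    rw [(TwoSidedIdeal.mem_bot R).1 ha, add_zero]
    exact isUnit_one
  · intro F e₁ e₂ _ he₁ he₂ h
    rw [Polynomial.map_id, Polynomial.map_id] at h ⊢
    refine ⟨(e₁, e₂), ⟨he₁, he₂, map_injective _ mk'_injective h.map_eq, rfl, rfl⟩, ?_⟩
    rintro ⟨p₁, p₂⟩ ⟨-, -, -, hp₁, hp₂⟩
    exact Prod.ext (map_injective _ mk'_injective hp₁) (map_injective _ mk'_injective hp₂)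

theorem IsPairHom.isCoprimeFactorization_map (hψ : IsPairHom I K ψ) {F₀ e₁ e₂ : A[X]} {F : B[X]}
    (hF : F.map K.ringCon.mk' = (F₀.map ψ).map K.ringCon.mk')
    (h : IsCoprimeFactorization I F₀ e₁ e₂) :
    IsCoprimeFactorization K F (e₁.map ψ) (e₂.map ψ) where
  monic_fst := h.monic_fst.map ψ
  monic_snd := h.monic_snd.map ψ
  leftCoprime := hψ.leftCoprime_map_mk' h.leftCoprime
  map_eq := by rw [hF, hψ.map_mk'_eq_map_mk'_iff.2 h.map_eq, Polynomial.map_mul]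

theorem IsPairHom.isCoprimeFactorization_monicOfCoeffs (hψ : IsPairHom I K ψ) {n : ℕ} {a : ℕ → A}
    {b : ℕ → B} (hab : ∀ k, K.ringCon.mk' (b k) = K.ringCon.mk' (ψ (a k))) {e₁ e₂ : A[X]}
    (h : IsCoprimeFactorization I (monicOfCoeffs n a) e₁ e₂) :
    IsCoprimeFactorization K (monicOfCoeffs n b) (e₁.map ψ) (e₂.map ψ) :=
  hψ.isCoprimeFactorization_map (by simp only [map_monicOfCoeffs, hab]) h

theorem IsPairHom.isCoprimeFactorization_of_surjective (hψ : IsPairHom I K ψ)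
    (hsurj : Function.Surjective (K.ringCon.mk'.comp ψ)) {F₀ e₁ e₂ : A[X]} {F : B[X]}
    (hF : F.map K.ringCon.mk' = (F₀.map ψ).map K.ringCon.mk') (he₁ : e₁.Monic) (he₂ : e₂.Monic)
    (h : IsCoprimeFactorization K F (e₁.map ψ) (e₂.map ψ)) :
    IsCoprimeFactorization I F₀ e₁ e₂ where
  monic_fst := he₁
  monic_snd := he₂
  leftCoprime := hψ.leftCoprime_of_surjective hsurj h.leftCoprime
  map_eq := hψ.map_mk'_eq_map_mk'_iff.1 (by rw [← hF, h.map_eq, Polynomial.map_mul ψ])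

theorem IsFactorLift.map (hψ : IsPairHom I K ψ) {F e₁ e₂ : A[X]} {p : A[X] × A[X]}
    (h : IsFactorLift I F e₁ e₂ p) :
    IsFactorLift K (F.map ψ) (e₁.map ψ) (e₂.map ψ) (p.1.map ψ, p.2.map ψ) := by
  obtain ⟨monic_fst, monic_snd, eq_mul, map_fst, map_snd⟩ := h
  exact ⟨monic_fst.map ψ, monic_snd.map ψ, by rw [eq_mul, Polynomial.map_mul],
    hψ.map_mk'_eq_map_mk'_iff.2 map_fst, hψ.map_mk'_eq_map_mk'_iff.2 map_snd⟩

/-- A chosen lift of the residual factorization of `F` represented by `e₁` and `e₂`; an arbitrary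
pair of polynomials if there is no lift. -/
noncomputable def factorLift (I : TwoSidedIdeal A) (F e₁ e₂ : A[X]) : A[X] × A[X] :=
  Classical.epsilon (IsFactorLift I F e₁ e₂)

theorem IsLeftHenselianPair.isFactorLift_factorLift (hI : IsLeftHenselianPair I)
    {F e₁ e₂ : A[X]} (hF : F.Monic) (h : IsCoprimeFactorization I F e₁ e₂) :
    IsFactorLift I F e₁ e₂ (factorLift I F e₁ e₂) :=
  Classical.epsilon_spec (hI.existsUnique_isFactorLift hF h).exists

theorem IsFactorLift.eq_factorLift (hI : IsLeftHenselianPair I) {F e₁ e₂ : A[X]} (hF : F.Monic)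
    (hcop : IsCoprimeFactorization I F e₁ e₂) {p : A[X] × A[X]} (hp : IsFactorLift I F e₁ e₂ p) :
    p = factorLift I F e₁ e₂ :=
  (hI.existsUnique_isFactorLift hF hcop).unique hp (hI.isFactorLift_factorLift hF hcop)

/-- The coefficients of both entries of a pair of polynomials, as a single family. -/
def pairCoeff (p : A[X] × A[X]) : ℕ ⊕ ℕ → A :=
  Sum.elim p.1.coeff p.2.coeff

theorem map_pairCoeff (f : A →+* B) (p : A[X] × A[X]) (i : ℕ ⊕ ℕ) :
    f (pairCoeff p i) = pairCoeff (p.1.map f, p.2.map f) i := by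
  cases i <;> simp [pairCoeff]

end FactorLift

/-- Recipes for elements of a left Henselian pair under `(A, I)`. Here `invOneAdd s` stands for the
inverse of `1 + s`, and `factorCoeff n c e₁ e₂ i` for the `i`-th coefficient of the lifted factors
of `monicOfCoeffs n c` along the residual factors represented by `e₁` and `e₂`. Ill-formed recipes
are allowed and take a default value. -/
inductive HenselTerm (A : Type u) [Ring A] : Type u
  | of (a : A) : HenselTerm A
  | add (s t : HenselTerm A) : HenselTerm A
  | mul (s t : HenselTerm A) : HenselTerm A
  | neg (s : HenselTerm A) : HenselTerm A
  | invOneAdd (s : HenselTerm A) : HenselTerm A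
  | factorCoeff (n : ℕ) (c : ℕ → HenselTerm A) (e₁ e₂ : A[X]) (i : ℕ ⊕ ℕ) : HenselTerm A

namespace HenselTerm

variable {A : Type u} {B C : Type*} [Ring A] [Ring B] [Ring C]
  {I : TwoSidedIdeal A} {K : TwoSidedIdeal B} {L : TwoSidedIdeal C} {ψ : A →+* B} {χ : B →+* C}

/-- An element of `A` congruent to the value of the term in every left Henselian pair under
`(A, I)`. -/
def residue : HenselTerm A → A
  | of a => a
  | add s t => s.residue + t.residue
  | mul s t => s.residue * t.residue
  | neg s => -s.residue
  | invOneAdd _ => 1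
  | factorCoeff _ _ e₁ e₂ i => pairCoeff (e₁, e₂) i

open Classical in
/-- The value of a term in a pair `(B, K)` under `(A, I)`. The side conditions of `invOneAdd` and
`factorCoeff` are imposed on residues, so that they do not depend on `(B, K)`; when they fail, the
value is the image of the residue. -/
noncomputable def eval (I : TwoSidedIdeal A) (K : TwoSidedIdeal B) (ψ : A →+* B) :
    HenselTerm A → B
  | of a => ψ a
  | add s t => s.eval I K ψ + t.eval I K ψ
  | mul s t => s.eval I K ψ * t.eval I K ψ
  | neg s => -s.eval I K ψ
  | invOneAdd s => if s.residue ∈ I then Ring.inverse (1 + s.eval I K ψ) else 1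
  | factorCoeff n c e₁ e₂ i =>
      if IsCoprimeFactorization I (monicOfCoeffs n fun k => (c k).residue) e₁ e₂ then
        pairCoeff (factorLift K (monicOfCoeffs n fun k => (c k).eval I K ψ)
          (e₁.map ψ) (e₂.map ψ)) i
      else ψ (pairCoeff (e₁, e₂) i)

theorem mk'_eval (hK : IsLeftHenselianPair K) (hψ : IsPairHom I K ψ) (t : HenselTerm A) :
    K.ringCon.mk' (t.eval I K ψ) = K.ringCon.mk' (ψ t.residue) := by
  induction t with
  | of a => rfl
  | add s t ihs iht => simp only [eval, residue, map_add, ihs, iht]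
  | mul s t ihs iht => simp only [eval, residue, map_mul, ihs, iht]
  | neg s ihs => simp only [eval, residue, map_neg, ihs]
  | invOneAdd s ihs =>
    rw [eval, residue, map_one]
    split_ifs with hs
    · have mk'_eval_eq_zero : K.ringCon.mk' (s.eval I K ψ) = 0 := by
        rwa [ihs, mk'_eq_zero_iff_mem, hψ]
      have isUnit := hK.1 _ ((mk'_eq_zero_iff_mem K).1 mk'_eval_eq_zero)
      simpa only [map_mul, map_add, map_one, mk'_eval_eq_zero, add_zero, one_mul]
        using congrArg K.ringCon.mk' (Ring.mul_inverse_cancel _ isUnit)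
    · rfl
  | factorCoeff n c e₁ e₂ i ihc =>
    rw [eval, residue]
    split_ifs with h
    · obtain ⟨-, -, -, map_fst, map_snd⟩ := hK.isFactorLift_factorLift
        (monic_monicOfCoeffs n _) (hψ.isCoprimeFactorization_monicOfCoeffs ihc h)
      rw [map_pairCoeff, map_pairCoeff, map_pairCoeff, map_fst, map_snd]
    · rfl

theorem eval_mem_iff (hK : IsLeftHenselianPair K) (hψ : IsPairHom I K ψ) (t : HenselTerm A) :
    t.eval I K ψ ∈ K ↔ t.residue ∈ I := by
  rw [← mk'_eq_zero_iff_mem, mk'_eval hK hψ, mk'_eq_zero_iff_mem, hψ]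

theorem isUnit_one_add_eval (hK : IsLeftHenselianPair K) (hψ : IsPairHom I K ψ)
    {t : HenselTerm A} (ht : t.residue ∈ I) : IsUnit (1 + t.eval I K ψ) :=
  hK.1 _ ((eval_mem_iff hK hψ t).2 ht)

theorem isCoprimeFactorization_eval (hK : IsLeftHenselianPair K) (hψ : IsPairHom I K ψ) {n : ℕ}
    {c : ℕ → HenselTerm A} {e₁ e₂ : A[X]}
    (h : IsCoprimeFactorization I (monicOfCoeffs n fun k => (c k).residue) e₁ e₂) :
    IsCoprimeFactorization K (monicOfCoeffs n fun k => (c k).eval I K ψ)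
      (e₁.map ψ) (e₂.map ψ) :=
  hψ.isCoprimeFactorization_monicOfCoeffs (fun k => mk'_eval hK hψ (c k)) h

theorem map_eval (hK : IsLeftHenselianPair K) (hL : IsLeftHenselianPair L)
    (hψ : IsPairHom I K ψ) (hχ : IsPairHom K L χ) (t : HenselTerm A) :
    χ (t.eval I K ψ) = t.eval I L (χ.comp ψ) := by
  induction t with
  | of a => rfl
  | add s t ihs iht => simp only [eval, map_add, ihs, iht]
  | mul s t ihs iht => simp only [eval, map_mul, ihs, iht]
  | neg s ihs => simp only [eval, map_neg, ihs]
  | invOneAdd s ihs =>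
    rw [eval, eval]
    split_ifs with hs
    · rw [map_ringInverse_of_isUnit χ (isUnit_one_add_eval hK hψ hs), map_add, map_one, ihs]
    · exact map_one χ
  | factorCoeff n c e₁ e₂ i ihc =>
    rw [eval, eval]
    split_ifs with h
    · have map_lift := (hK.isFactorLift_factorLift (monic_monicOfCoeffs n _)
        (isCoprimeFactorization_eval hK hψ h)).map hχ
      rw [map_monicOfCoeffs, Polynomial.map_map, Polynomial.map_map, funext ihc] at map_lift
      rw [map_pairCoeff, map_lift.eq_factorLift hL (monic_monicOfCoeffs n _)
        (isCoprimeFactorization_eval hL (hχ.comp hψ) h)]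
    · rfl

end HenselTerm

section TermRing

variable {A : Type u} [Ring A] {I : TwoSidedIdeal A} {ι : Type*} {B : ι → Type*}
  [∀ i, Ring (B i)] {K : ∀ i, TwoSidedIdeal (B i)} {ψ : ∀ i, A →+* B i}

/-- `H` is, up to isomorphism, the subring of `∀ i, B i` that consists of the simultaneous values
of terms. This is a property of `H`, rather than a construction, so that `H` can be taken in a
universe that does not depend on `ι`. -/
structure IsTermRing {H : Type*} [Ring H] (I : TwoSidedIdeal A) (K : ∀ i, TwoSidedIdeal (B i))
    (ψ : ∀ i, A →+* B i) (φ : A →+* H) (pr : ∀ i, H →+* B i) : Prop where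
  jointly_injective : ∀ x y, (∀ i, pr i x = pr i y) → x = y
  comp_eq : ∀ i, (pr i).comp φ = ψ i
  exists_term : ∀ x, ∃ t : HenselTerm A, ∀ i, pr i x = t.eval I (K i) (ψ i)
  exists_value : ∀ t : HenselTerm A, ∃ x, ∀ i, pr i x = t.eval I (K i) (ψ i)

/-- The simultaneous values of all terms in a family of pairs under `(A, I)`. -/
def termSubring (I : TwoSidedIdeal A) (K : ∀ i, TwoSidedIdeal (B i)) (ψ : ∀ i, A →+* B i) :
    Subring (∀ i, B i) where
  carrier := Set.range fun (t : HenselTerm A) i => t.eval I (K i) (ψ i)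
  mul_mem' := by rintro _ _ ⟨s, rfl⟩ ⟨t, rfl⟩; exact ⟨.mul s t, rfl⟩
  add_mem' := by rintro _ _ ⟨s, rfl⟩ ⟨t, rfl⟩; exact ⟨.add s t, rfl⟩
  neg_mem' := by rintro _ ⟨s, rfl⟩; exact ⟨.neg s, rfl⟩
  zero_mem' := ⟨.of 0, funext fun i => map_zero (ψ i)⟩
  one_mem' := ⟨.of 1, funext fun i => map_one (ψ i)⟩

theorem exists_isTermRing (I : TwoSidedIdeal A) (K : ∀ i, TwoSidedIdeal (B i))
    (ψ : ∀ i, A →+* B i) :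
    ∃ (H : Type u) (_ : Ring H) (φ : A →+* H) (pr : ∀ i, H →+* B i), IsTermRing I K ψ φ pr := by
  let S := termSubring I K ψ
  have : Small.{u} S := small_range fun (t : HenselTerm A) i => t.eval I (K i) (ψ i)
  let shrinkEquiv : Shrink.{u} S ≃+* S := Shrink.ringEquiv S
  refine ⟨Shrink.{u} S, inferInstance,
    (shrinkEquiv.symm : S →+* Shrink.{u} S).comp
      ((RingHom.pi ψ).codRestrict S fun a => ⟨.of a, rfl⟩),
    fun i => ((Pi.evalRingHom B i).comp S.subtype).comp shrinkEquiv, ?_, ?_, ?_, ?_⟩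
  · exact fun x y h => shrinkEquiv.injective (Subtype.ext (funext h))
  · intro i
    ext a
    exact congrArg (fun s : S => (s : ∀ i, B i) i) (shrinkEquiv.apply_symm_apply _)
  · intro x
    obtain ⟨t, ht⟩ := (shrinkEquiv x).2
    exact ⟨t, fun i => (congrFun ht i).symm⟩
  · exact fun t => ⟨shrinkEquiv.symm ⟨_, t, rfl⟩, fun i => by simp⟩

namespace IsTermRing

variable {H : Type*} [Ring H] {J : TwoSidedIdeal H} {φ : A →+* H} {pr : ∀ i, H →+* B i}

theorem map_jointly_injective (hH : IsTermRing I K ψ φ pr) {F G : H[X]}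
    (h : ∀ i, F.map (pr i) = G.map (pr i)) : F = G := by
  ext n
  refine hH.jointly_injective _ _ fun i => ?_
  rw [← coeff_map, h, coeff_map]

theorem isPairHom_proj (hH : IsTermRing I K ψ φ pr) (hK : ∀ i, IsLeftHenselianPair (K i))
    (hψ : ∀ i, IsPairHom I (K i) (ψ i)) (i₀ i : ι) :
    IsPairHom ((K i₀).comap (pr i₀)) (K i) (pr i) := by
  intro x
  obtain ⟨t, ht⟩ := hH.exists_term x
  rw [TwoSidedIdeal.mem_comap, ht, ht, HenselTerm.eval_mem_iff (hK i) (hψ i),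
    HenselTerm.eval_mem_iff (hK i₀) (hψ i₀)]

theorem isPairHom [Nonempty ι] (hH : IsTermRing I K ψ φ pr) (hψ : ∀ i, IsPairHom I (K i) (ψ i))
    (hpr : ∀ i, IsPairHom J (K i) (pr i)) : IsPairHom I J φ := by
  obtain ⟨i⟩ := ‹Nonempty ι›
  intro a
  rw [← hpr i, ← RingHom.comp_apply, hH.comp_eq, hψ]

theorem mk'_eq_mk'_residue [Nonempty ι] (hH : IsTermRing I K ψ φ pr)
    (hK : ∀ i, IsLeftHenselianPair (K i)) (hψ : ∀ i, IsPairHom I (K i) (ψ i))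
    (hpr : ∀ i, IsPairHom J (K i) (pr i)) {x : H} {t : HenselTerm A}
    (ht : ∀ i, pr i x = t.eval I (K i) (ψ i)) :
    J.ringCon.mk' x = J.ringCon.mk' (φ t.residue) := by
  obtain ⟨i⟩ := ‹Nonempty ι›
  rw [← (hpr i).mk'_eq_mk'_iff, ht, HenselTerm.mk'_eval (hK i) (hψ i), ← hH.comp_eq i,
    RingHom.comp_apply]

theorem surjective_mk'_comp [Nonempty ι] (hH : IsTermRing I K ψ φ pr)
    (hK : ∀ i, IsLeftHenselianPair (K i)) (hψ : ∀ i, IsPairHom I (K i) (ψ i))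
    (hpr : ∀ i, IsPairHom J (K i) (pr i)) : Function.Surjective (J.ringCon.mk'.comp φ) := by
  intro r
  obtain ⟨x, rfl⟩ := J.ringCon.mk'_surjective r
  obtain ⟨t, ht⟩ := hH.exists_term x
  exact ⟨t.residue, (hH.mk'_eq_mk'_residue hK hψ hpr ht).symm⟩

theorem isJacobsonPair [Nonempty ι] (hH : IsTermRing I K ψ φ pr)
    (hK : ∀ i, IsLeftHenselianPair (K i)) (hψ : ∀ i, IsPairHom I (K i) (ψ i))
    (hpr : ∀ i, IsPairHom J (K i) (pr i)) : IsJacobsonPair J := by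
  intro x hx
  obtain ⟨t, ht⟩ := hH.exists_term x
  have residue_mem : t.residue ∈ I := by
    rwa [← hH.isPairHom hψ hpr, ← mk'_eq_zero_iff_mem, ← hH.mk'_eq_mk'_residue hK hψ hpr ht,
      mk'_eq_zero_iff_mem]
  obtain ⟨y, hy⟩ := hH.exists_value (.invOneAdd t)
  have proj_inv (i : ι) : pr i y = Ring.inverse (pr i (1 + x)) := by
    rw [hy, HenselTerm.eval, if_pos residue_mem, map_add, map_one, ht]
  have isUnit_proj (i : ι) : IsUnit (pr i (1 + x)) := by
    rw [map_add, map_one]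
    exact (hK i).1 _ ((hpr i x).2 hx)
  refine ⟨⟨1 + x, y, ?_, ?_⟩, rfl⟩ <;> refine hH.jointly_injective _ _ fun i => ?_
  · rw [map_mul, proj_inv, Ring.mul_inverse_cancel _ (isUnit_proj i), map_one]
  · rw [map_mul, proj_inv, Ring.inverse_mul_cancel _ (isUnit_proj i), map_one]

theorem exists_pairCoeff_eq [Nonempty ι] (hH : IsTermRing I K ψ φ pr)
    (hK : ∀ i, IsLeftHenselianPair (K i)) (hψ : ∀ i, IsPairHom I (K i) (ψ i))
    (hpr : ∀ i, IsPairHom J (K i) (pr i)) {F : H[X]} {e₁ e₂ : A[X]} (hF : F.Monic)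
    (he₁ : e₁.Monic) (he₂ : e₂.Monic)
    (h : IsCoprimeFactorization J F (e₁.map φ) (e₂.map φ)) :
    ∃ y : ℕ ⊕ ℕ → H, ∀ i k,
      pr i (y k) = pairCoeff (factorLift (K i) (F.map (pr i)) (e₁.map (ψ i)) (e₂.map (ψ i))) k := by
  choose c hc using fun k => hH.exists_term (F.coeff k)
  have map_mk'_eq : F.map J.ringCon.mk' =
      ((monicOfCoeffs F.natDegree fun k => (c k).residue).map φ).map J.ringCon.mk' := by
    conv_lhs => rw [← monicOfCoeffs_coeff_of_monic hF]
    simp only [map_monicOfCoeffs, hH.mk'_eq_mk'_residue hK hψ hpr (hc _)]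
  have coprime_residue :=
    (hH.isPairHom hψ hpr).isCoprimeFactorization_of_surjective
      (hH.surjective_mk'_comp hK hψ hpr) map_mk'_eq he₁ he₂ h
  choose y hy using fun k => hH.exists_value (.factorCoeff F.natDegree c e₁ e₂ k)
  refine ⟨y, fun i k => ?_⟩
  rw [hy, HenselTerm.eval, if_pos coprime_residue, ← funext fun k => hc k i,
    ← map_monicOfCoeffs, monicOfCoeffs_coeff_of_monic hF]

theorem isFactorLift_map_proj (hH : IsTermRing I K ψ φ pr)
    (hpr : ∀ i, IsPairHom J (K i) (pr i)) {F : H[X]} {e₁ e₂ : A[X]} {q : H[X] × H[X]}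
    (h : IsFactorLift J F (e₁.map φ) (e₂.map φ) q) (i : ι) :
    IsFactorLift (K i) (F.map (pr i)) (e₁.map (ψ i)) (e₂.map (ψ i))
      (q.1.map (pr i), q.2.map (pr i)) := by
  simpa only [Polynomial.map_map, hH.comp_eq] using h.map (hpr i)

theorem isFactorLift_of_map_proj [Nonempty ι] (hH : IsTermRing I K ψ φ pr)
    (hpr : ∀ i, IsPairHom J (K i) (pr i)) {F : H[X]} {e₁ e₂ : A[X]} {q : H[X] × H[X]}
    (hq₁ : q.1.Monic) (hq₂ : q.2.Monic)
    (h : ∀ i, IsFactorLift (K i) (F.map (pr i)) (e₁.map (ψ i)) (e₂.map (ψ i))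
      (q.1.map (pr i), q.2.map (pr i))) :
    IsFactorLift J F (e₁.map φ) (e₂.map φ) q := by
  refine ⟨hq₁, hq₂, hH.map_jointly_injective fun i => ?_, ?_⟩
  · rw [Polynomial.map_mul]
    exact (h i).2.2.1
  · obtain ⟨i⟩ := ‹Nonempty ι›
    rw [← (hpr i).map_mk'_eq_map_mk'_iff, ← (hpr i).map_mk'_eq_map_mk'_iff,
      Polynomial.map_map φ, Polynomial.map_map φ, hH.comp_eq]
    exact (h i).2.2.2

theorem existsUnique_isFactorLift [Nonempty ι] (hH : IsTermRing I K ψ φ pr)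
    (hK : ∀ i, IsLeftHenselianPair (K i)) (hψ : ∀ i, IsPairHom I (K i) (ψ i))
    (hpr : ∀ i, IsPairHom J (K i) (pr i)) {F : H[X]} {e₁ e₂ : A[X]} (hF : F.Monic)
    (he₁ : e₁.Monic) (he₂ : e₂.Monic)
    (h : IsCoprimeFactorization J F (e₁.map φ) (e₂.map φ)) :
    ∃! q, IsFactorLift J F (e₁.map φ) (e₂.map φ) q := by
  have coprime_proj (i : ι) :
      IsCoprimeFactorization (K i) (F.map (pr i)) (e₁.map (ψ i)) (e₂.map (ψ i)) := by
    simpa only [Polynomial.map_map, hH.comp_eq] using (hpr i).isCoprimeFactorization_map rfl h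
  have lift_proj (i : ι) := (hK i).isFactorLift_factorLift (hF.map (pr i)) (coprime_proj i)
  obtain ⟨y, hy⟩ := hH.exists_pairCoeff_eq hK hψ hpr hF he₁ he₂ h
  let q : H[X] × H[X] := (monicOfCoeffs e₁.natDegree fun k => y (.inl k),
    monicOfCoeffs e₂.natDegree fun k => y (.inr k))
  have map_q (i : ι) : (q.1.map (pr i), q.2.map (pr i)) =
      factorLift (K i) (F.map (pr i)) (e₁.map (ψ i)) (e₂.map (ψ i)) := by
    obtain ⟨monic_fst, monic_snd, -, map_fst, map_snd⟩ := lift_proj i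
    simp only [q, map_monicOfCoeffs, hy, pairCoeff, Sum.elim_inl, Sum.elim_inr]
    exact Prod.ext ((hK i).1.monicOfCoeffs_coeff_of_map_mk'_eq monic_fst he₁ map_fst)
      ((hK i).1.monicOfCoeffs_coeff_of_map_mk'_eq monic_snd he₂ map_snd)
  refine ⟨q, hH.isFactorLift_of_map_proj hpr (monic_monicOfCoeffs _ _) (monic_monicOfCoeffs _ _)
    fun i => (map_q i).symm ▸ lift_proj i, fun r hr => ?_⟩
  have map_r_eq_map_q (i : ι) :
      (r.1.map (pr i), r.2.map (pr i)) = (q.1.map (pr i), q.2.map (pr i)) :=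
    ((hH.isFactorLift_map_proj hpr hr i).eq_factorLift (hK i) (hF.map _) (coprime_proj i)).trans
      (map_q i).symm
  exact Prod.ext (hH.map_jointly_injective fun i => congrArg Prod.fst (map_r_eq_map_q i))
    (hH.map_jointly_injective fun i => congrArg Prod.snd (map_r_eq_map_q i))

theorem isLeftHenselianPair [Nonempty ι] (hH : IsTermRing I K ψ φ pr)
    (hK : ∀ i, IsLeftHenselianPair (K i)) (hψ : ∀ i, IsPairHom I (K i) (ψ i))
    (hpr : ∀ i, IsPairHom J (K i) (pr i)) : IsLeftHenselianPair J :=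
  isLeftHenselianPair_of_surjective (hH.surjective_mk'_comp hK hψ hpr)
    (hH.isJacobsonPair hK hψ hpr) fun _ _ _ => hH.existsUnique_isFactorLift hK hψ hpr

-- Both `χ` and `pr i` carry the value of a term in `H` to its value in `B i`.
theorem eq_proj_of_comp_eq [Nonempty ι] (hH : IsTermRing I K ψ φ pr)
    (hK : ∀ i, IsLeftHenselianPair (K i)) (hψ : ∀ i, IsPairHom I (K i) (ψ i))
    (hpr : ∀ i, IsPairHom J (K i) (pr i)) {i : ι} {χ : H →+* B i} (hχ : IsPairHom J (K i) χ)
    (hcomp : χ.comp φ = ψ i) : χ = pr i := by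
  have hJ := hH.isLeftHenselianPair hK hψ hpr
  have hφ := hH.isPairHom hψ hpr
  ext x
  obtain ⟨t, ht⟩ := hH.exists_term x
  have eval_eq : t.eval I J φ = x := hH.jointly_injective _ _ fun k => by
    rw [HenselTerm.map_eval hJ (hK k) hφ (hpr k), hH.comp_eq, ht]
  rw [ht, ← eval_eq, HenselTerm.map_eval hJ (hK i) hφ hχ, hcomp]

end IsTermRing

end TermRing

/-- A perfect left Henselian pair `(ring, ideal)` with a morphism of pairs from `(A, I)`. These
objects index the family whose ring of term values is the left Henselization. -/
structure PerfectHenselianUnder {A : Type u} [Ring A] (I : TwoSidedIdeal A) : Type (u + 1) where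
  carrier : Type u
  [ring : Ring carrier]
  ideal : TwoSidedIdeal carrier
  hom : A →+* carrier
  isPairHom : IsPairHom I ideal hom
  isPerfectPair : IsPerfectPair ideal
  isLeftHenselianPair : IsLeftHenselianPair ideal

namespace PerfectHenselianUnder

attribute [instance] PerfectHenselianUnder.ring

/-- The quotient `A ⧸ I` with the zero ideal. -/
def residueRing {A : Type u} [Ring A] (I : TwoSidedIdeal A) : PerfectHenselianUnder I where
  carrier := I.ringCon.Quotient
  ideal := ⊥
  hom := I.ringCon.mk'
  isPairHom _ := (TwoSidedIdeal.mem_bot _).trans (mk'_eq_zero_iff_mem I)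
  isPerfectPair _ hx := (TwoSidedIdeal.mem_bot _).1 (hx 0)
  isLeftHenselianPair := isLeftHenselianPair_bot _

end PerfectHenselianUnder

theorem exists_leftHenselization_general {A : Type u} [Ring A] (I : TwoSidedIdeal A) :
    ∃ (H : Type u) (_ : Ring H) (J : TwoSidedIdeal H) (φ : A →+* H),
      IsLeftHenselization I J φ := by
  let residueRing := PerfectHenselianUnder.residueRing I
  have : Nonempty (PerfectHenselianUnder I) := ⟨residueRing⟩
  have hK (i : PerfectHenselianUnder I) := i.isLeftHenselianPair
  have hψ (i : PerfectHenselianUnder I) := i.isPairHom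
  obtain ⟨H, _, φ, pr, hH⟩ := exists_isTermRing I
    (fun i : PerfectHenselianUnder I => i.ideal) fun i => i.hom
  have hpr := hH.isPairHom_proj hK hψ residueRing
  refine ⟨H, inferInstance, residueRing.ideal.comap (pr residueRing), φ, hH.isPairHom hψ hpr,
    isPerfectPair_of_isPairHom_of_jointly_injective (fun i => i.isPerfectPair) hpr
      hH.jointly_injective,
    hH.isLeftHenselianPair hK hψ hpr, fun B _ K ψ₀ hψ₀ hperf hhens => ?_⟩
  let i : PerfectHenselianUnder I := ⟨B, K, ψ₀, hψ₀, hperf, hhens⟩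
  exact ⟨pr i, ⟨hpr i, (hH.comp_eq i).symm⟩,
    fun χ ⟨hχ, hcomp⟩ => hH.eq_proj_of_comp_eq hK hψ hpr (i := i) hχ hcomp.symm⟩

/-- Theorem `NHenselCom`: every perfect pair has a left Henselization. -/
theorem exists_leftHenselization {A : Type u} [Ring A] (I : TwoSidedIdeal A)
    (hperf : IsPerfectPair I) :
    ∃ (H : Type u) (_ : Ring H) (J : TwoSidedIdeal H) (φ : A →+* H),
      IsLeftHenselization I J φ := by
  exact exists_leftHenselization_general I
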